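/- Brunn–Minkowski in boxes: let P = ∏_{i=1}^d [0, n_i] ∩ ℤ^d with each n_i ≥ n, and let Y ⊆ P and Z be nonempty finite subsets of ℤ^d. Then |Y+Z|^{1/d} ≥ (max(|Y| − d·n^{−1}·|P|, 0))^{1/d} + |Z|^{1/d}. -/

import Mathlib

open Pointwise

/-!
For `π i` the projection along the `i`-th coordinate axis, one proves the box-free inequality
`(|Y| - ∑ i, |π i Y|) ^ (1 / d) + |Z| ^ (1 / d) ≤ |Y + Z| ^ (1 / d)` by induction on `d`; in a box
each `|π i Y|` is at most `|P| / n`. In dimension one this is the Cauchy–Davenport bound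
`|Y| - 1 + |Z| ≤ |Y + Z|`. In dimension `m + 1`, cut `Y` and `Z` along the first coordinate and
normalise the functions `i ↦ |Y i| - ∑ k, |π k (Y i)|` and `j ↦ |Z j|` to have maximum `1`. The
inequality in dimension `m` bounds the size of the slices of `Y + Z` below on the sum of any two
superlevel sets, and integrating Cauchy–Davenport over the levels `t ∈ (0, 1]` gives a lower bound
for `|Y + Z|`. It loses only the size of one slice of `Y`, which `|π 0 Y|` pays for, and convexity
of `x ↦ x ^ (m + 1)` turns it into the inequality in dimension `m + 1`.
-/

open Finset MeasureTheory

section Superlevel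

variable {ι : Type*} (S : Finset ι) (x : ι → ℝ)

lemma integrableOn_indicator_Iic (r : ℝ) :
    IntegrableOn ((Set.Iic r).indicator (1 : ℝ → ℝ)) (Set.Ioc 0 1) :=
  (integrable_const (1 : ℝ)).indicator measurableSet_Iic

lemma card_superlevel_eq_sum_indicator (t : ℝ) :
    (#{i ∈ S | t ≤ x i} : ℝ) = ∑ i ∈ S, (Set.Iic (x i)).indicator 1 t := by
  simp [Set.indicator_apply]

lemma integrableOn_card_superlevel :
    IntegrableOn (fun t : ℝ => (#{i ∈ S | t ≤ x i} : ℝ)) (Set.Ioc 0 1) := by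
  simp only [card_superlevel_eq_sum_indicator]
  exact integrable_finsetSum _ fun i _ => integrableOn_indicator_Iic (x i)

lemma setIntegral_card_superlevel :
    ∫ t in Set.Ioc (0 : ℝ) 1, (#{i ∈ S | t ≤ x i} : ℝ) = ∑ i ∈ S, max (min (x i) 1) 0 := by
  simp only [card_superlevel_eq_sum_indicator]
  rw [integral_finsetSum _ fun i _ => integrableOn_indicator_Iic (x i)]
  refine sum_congr rfl fun i _ => ?_
  rw [integral_indicator_one measurableSet_Iic, measureReal_restrict_apply measurableSet_Iic,
    Set.inter_comm, Set.Ioc_inter_Iic, Real.volume_real_Ioc, sub_zero, min_comm]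

end Superlevel

lemma cauchy_davenport_of_min_le {α : Type*} [LinearOrder α] [Add α] [IsCancelAdd α]
    [AddLeftMono α] [AddRightMono α] {I J : Finset α} {f g h : α → ℝ}
    (hf : ∀ i ∈ I, f i ≤ 1) (hg : ∀ j ∈ J, g j ≤ 1)
    (hf_max : ∃ i ∈ I, f i = 1) (hg_max : ∃ j ∈ J, g j = 1) (hh : ∀ k ∈ I + J, 0 ≤ h k)
    (hfgh : ∀ i ∈ I, ∀ j ∈ J, min (f i) (g j) ≤ h (i + j)) :
    ∑ i ∈ I, f i + ∑ j ∈ J, g j ≤ ∑ k ∈ I + J, h k + 1 := by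
  have cauchy_davenport_superlevel : ∀ t ∈ Set.Ioc (0 : ℝ) 1,
      (#{i ∈ I | t ≤ f i} : ℝ) + #{j ∈ J | t ≤ g j} ≤ #{k ∈ I + J | t ≤ h k} + 1 := by
    intro t ht
    have hI : {i ∈ I | t ≤ f i}.Nonempty := by
      obtain ⟨i, hi, hi1⟩ := hf_max
      exact ⟨i, mem_filter.2 ⟨hi, hi1 ▸ ht.2⟩⟩
    have hJ : {j ∈ J | t ≤ g j}.Nonempty := by
      obtain ⟨j, hj, hj1⟩ := hg_max
      exact ⟨j, mem_filter.2 ⟨hj, hj1 ▸ ht.2⟩⟩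
    have hsub : {i ∈ I | t ≤ f i} + {j ∈ J | t ≤ g j} ⊆ {k ∈ I + J | t ≤ h k} := by
      refine add_subset_iff.2 fun i hi j hj => ?_
      rw [mem_filter] at hi hj ⊢
      exact ⟨add_mem_add hi.1 hj.1, (le_min hi.2 hj.2).trans (hfgh i hi.1 j hj.1)⟩
    have := (cauchy_davenport_add_of_linearOrder_isCancelAdd hI hJ).trans (card_le_card hsub)
    exact_mod_cast Nat.sub_le_iff_le_add.1 this
  have hint {S : Finset α} (x : α → ℝ) := integrableOn_card_superlevel S x
  calc
    ∑ i ∈ I, f i + ∑ j ∈ J, g j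
      ≤ ∑ i ∈ I, max (min (f i) 1) 0 + ∑ j ∈ J, max (min (g j) 1) 0 := by
        gcongr with i hi j hj
        · exact le_max_of_le_left (le_min le_rfl (hf i hi))
        · exact le_max_of_le_left (le_min le_rfl (hg j hj))
    _ = ∫ t in Set.Ioc (0 : ℝ) 1, ((#{i ∈ I | t ≤ f i} : ℝ) + #{j ∈ J | t ≤ g j}) := by
        rw [integral_add (hint f) (hint g), setIntegral_card_superlevel,
          setIntegral_card_superlevel]
    _ ≤ ∫ t in Set.Ioc (0 : ℝ) 1, ((#{k ∈ I + J | t ≤ h k} : ℝ) + 1) :=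
        setIntegral_mono_on ((hint f).add (hint g)) ((hint h).add (integrable_const 1))
          measurableSet_Ioc cauchy_davenport_superlevel
    _ = ∑ k ∈ I + J, max (min (h k) 1) 0 + 1 := by
        rw [integral_add (hint h) (integrable_const 1), setIntegral_card_superlevel]
        simp
    _ ≤ ∑ k ∈ I + J, h k + 1 := by
        gcongr with k hk
        exact max_le (min_le_left _ _) (hh k hk)

section RealInequalities

lemma add_pow_succ_div_le {a b u v : ℝ} (ha : 0 ≤ a) (hb : 0 ≤ b) (hu : 0 < u) (hv : 0 < v)
    (m : ℕ) :
    (a + b) ^ (m + 1) / (u + v) ^ m ≤ a ^ (m + 1) / u ^ m + b ^ (m + 1) / v ^ m := by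
  have hweights : u / (u + v) + v / (u + v) = 1 := by field_simp
  have hconv := (convexOn_pow (𝕜 := ℝ) (m + 1)).2 (Set.mem_Ici.2 (div_nonneg ha hu.le))
    (Set.mem_Ici.2 (div_nonneg hb hv.le)) (by positivity) (by positivity) hweights
  have hmean : u / (u + v) * (a / u) + v / (u + v) * (b / v) = (a + b) / (u + v) := by field_simp
  simp only [smul_eq_mul, hmean] at hconv
  calc
    (a + b) ^ (m + 1) / (u + v) ^ m
      = (u + v) * ((a + b) / (u + v)) ^ (m + 1) := by
        rw [div_pow, pow_succ (u + v)]
        field_simp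
    _ ≤ (u + v) * (u / (u + v) * (a / u) ^ (m + 1) + v / (u + v) * (b / v) ^ (m + 1)) := by
        gcongr
    _ = a ^ (m + 1) / u ^ m + b ^ (m + 1) / v ^ m := by
        rw [div_pow, div_pow, pow_succ u, pow_succ v]
        field_simp

lemma exists_pos_pow_eq {m : ℕ} (hm : m ≠ 0) {x : ℝ} (hx : 0 < x) : ∃ r : ℝ, 0 < r ∧ r ^ m = x :=
  ⟨x ^ (m : ℝ)⁻¹, by positivity, Real.rpow_inv_natCast_pow hx.le hm⟩

lemma exists_pow_eq_max_of_sum_pos {ι : Type*} {I : Finset ι} {f : ι → ℝ} {m : ℕ} (hm : m ≠ 0)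
    (hf : 0 < ∑ i ∈ I, f i) :
    ∃ r : ℝ, 0 < r ∧ (∀ i ∈ I, f i ≤ r ^ m) ∧ ∃ i ∈ I, f i = r ^ m := by
  obtain ⟨i, hi, hmax⟩ := exists_max_image I f (nonempty_of_sum_ne_zero hf.ne')
  have hpos : 0 < f i := by
    obtain ⟨j, hj, hfj⟩ := exists_lt_of_sum_lt (sum_const_zero.trans_lt hf)
    exact hfj.trans_le (hmax j hj)
  obtain ⟨r, hr, hri⟩ := exists_pos_pow_eq hm hpos
  exact ⟨r, hr, fun j hj => hri ▸ hmax j hj, i, hi, hri.symm⟩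

end RealInequalities

section Projections

variable {α : Type*} [DecidableEq α]

/-- The slice of `A` at first coordinate `i`, as a set in one dimension less. -/
def coordSlice {m : ℕ} (i : α) (A : Finset (Fin (m + 1) → α)) : Finset (Fin m → α) :=
  {y ∈ A | y 0 = i}.image Fin.tail

/-- The projection of `A` along the `i`-th coordinate axis, realised inside the same space as the
projection onto the hyperplane where the `i`-th coordinate vanishes. -/
def coordProj {ι : Type*} [Fintype ι] [DecidableEq ι] [Zero α] (i : ι) (A : Finset (ι → α)) :
    Finset (ι → α) :=
  A.image fun y => Function.update y i 0

/-- The cardinality of `A` minus those of its coordinate projections. This is the quantity which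
takes the place of `|A|` in the discrete Brunn–Minkowski inequality; it may be negative. -/
def projExcess {ι : Type*} [Fintype ι] [DecidableEq ι] [Zero α] (A : Finset (ι → α)) : ℝ :=
  #A - ∑ i, (#(coordProj i A) : ℝ)

section Slices

variable {m : ℕ} {A : Finset (Fin (m + 1) → α)} {I : Finset α}

lemma mem_coordSlice {i : α} {w : Fin m → α} :
    w ∈ coordSlice i A ↔ (Fin.cons i w : Fin (m + 1) → α) ∈ A := by
  simp only [coordSlice, mem_image, mem_filter]
  constructor
  · rintro ⟨y, ⟨hy, rfl⟩, rfl⟩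
    rwa [Fin.cons_self_tail]
  · exact fun h => ⟨_, ⟨h, Fin.cons_zero _ _⟩, Fin.tail_cons _ _⟩

lemma card_coordSlice (i : α) (A : Finset (Fin (m + 1) → α)) :
    #(coordSlice i A) = #{y ∈ A | y 0 = i} := by
  refine card_image_of_injOn fun x hx y hy h => ?_
  rw [mem_coe, mem_filter] at hx hy
  rw [← Fin.cons_self_tail x, ← Fin.cons_self_tail y, hx.2, hy.2, h]

lemma sum_card_coordSlice (hA : ∀ y ∈ A, y 0 ∈ I) : ∑ i ∈ I, #(coordSlice i A) = #A := by
  simp only [card_coordSlice]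
  exact (card_eq_sum_card_fiberwise hA).symm

lemma coordSlice_add_subset [Add α] (i j : α) (A B : Finset (Fin (m + 1) → α)) :
    coordSlice i A + coordSlice j B ⊆ coordSlice (i + j) (A + B) := by
  refine add_subset_iff.2 fun v hv w hw => ?_
  rw [mem_coordSlice] at *
  have hcons : (Fin.cons (i + j) (v + w) : Fin (m + 1) → α) = Fin.cons i v + Fin.cons j w := by
    ext k
    cases k using Fin.cases <;> simp
  exact hcons ▸ add_mem_add hv hw

variable [Zero α]

lemma coordSlice_coordProj_succ (i : α) (k : Fin m) (A : Finset (Fin (m + 1) → α)) :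
    coordSlice i (coordProj k.succ A) = coordProj k (coordSlice i A) := by
  ext w
  rw [mem_coordSlice, coordProj, coordProj, mem_image, mem_image]
  constructor
  · rintro ⟨y, hy, hyw⟩
    rw [← Fin.cons_self_tail y, ← Fin.cons_update] at hyw
    obtain ⟨rfl, rfl⟩ := Fin.cons_inj.1 hyw
    exact ⟨Fin.tail y, mem_coordSlice.2 (by rwa [Fin.cons_self_tail]), rfl⟩
  · rintro ⟨v, hv, rfl⟩
    exact ⟨_, mem_coordSlice.1 hv, (Fin.cons_update ..).symm⟩

lemma card_coordSlice_le_card_coordProj_zero (i : α) (A : Finset (Fin (m + 1) → α)) :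
    #(coordSlice i A) ≤ #(coordProj 0 A) := by
  have hsub : coordSlice i A ⊆ coordSlice 0 (coordProj 0 A) := fun w hw =>
    mem_coordSlice.2 (mem_image.2 ⟨_, mem_coordSlice.1 hw, Fin.update_cons_zero ..⟩)
  refine (card_le_card hsub).trans ?_
  rw [card_coordSlice]
  exact card_filter_le _ _

lemma sum_projExcess_coordSlice (hA : ∀ y ∈ A, y 0 ∈ I) :
    ∑ i ∈ I, projExcess (coordSlice i A) = projExcess A + #(coordProj 0 A) := by
  have hproj (k : Fin m) : ∑ i ∈ I, #(coordProj k (coordSlice i A)) = #(coordProj k.succ A) := by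
    simp only [← coordSlice_coordProj_succ]
    refine sum_card_coordSlice fun y hy => ?_
    obtain ⟨x, hx, rfl⟩ := mem_image.1 hy
    simpa [(Fin.succ_ne_zero k).symm] using hA x hx
  simp only [projExcess, sum_sub_distrib, Fin.sum_univ_succ]
  rw [sum_comm, ← sum_card_coordSlice hA]
  simp only [← hproj]
  push_cast
  ring

end Slices

section Box

variable {ι : Type*} [Fintype ι] [DecidableEq ι] [Zero α]

lemma projExcess_le_card (A : Finset (ι → α)) : projExcess A ≤ #A :=
  sub_le_self _ (by positivity)

lemma nonempty_of_projExcess_pos {A : Finset (ι → α)} (hA : 0 < projExcess A) : A.Nonempty :=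
  card_pos.1 (by exact_mod_cast hA.trans_le (projExcess_le_card A))

lemma card_coordProj_mul_card_le {I : ι → Finset α} {A : Finset (ι → α)}
    (hA : A ⊆ Fintype.piFinset I) (i : ι) :
    #(coordProj i A) * #(I i) ≤ #(Fintype.piFinset I) := by
  have hsub : coordProj i A ⊆ Fintype.piFinset (Function.update I i {0}) := by
    refine image_subset_iff.2 fun y hy => Fintype.mem_piFinset.2 fun j => ?_
    obtain rfl | hj := eq_or_ne j i
    · simp
    · simpa [hj] using Fintype.mem_piFinset.1 (hA hy) j
  have hfacet : #(Fintype.piFinset (Function.update I i {0})) = ∏ j ∈ univ.erase i, #(I j) := by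
    rw [Fintype.card_piFinset, ← mul_prod_erase _ _ (mem_univ i), Function.update_self,
      card_singleton, one_mul]
    exact prod_congr rfl fun j hj => by rw [Function.update_of_ne (ne_of_mem_erase hj)]
  calc
    #(coordProj i A) * #(I i) ≤ (∏ j ∈ univ.erase i, #(I j)) * #(I i) := by
      gcongr
      exact (card_le_card hsub).trans_eq hfacet
    _ = #(Fintype.piFinset I) := by
      rw [prod_erase_mul _ _ (mem_univ i), Fintype.card_piFinset]

lemma card_sub_le_projExcess {n : ℕ} (hn : 0 < n) {I : ι → Finset α} (hI : ∀ i, n ≤ #(I i))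
    {A : Finset (ι → α)} (hA : A ⊆ Fintype.piFinset I) :
    (#A : ℝ) - Fintype.card ι * (n : ℝ)⁻¹ * #(Fintype.piFinset I) ≤ projExcess A := by
  have hproj (i : ι) : (#(coordProj i A) : ℝ) ≤ (n : ℝ)⁻¹ * #(Fintype.piFinset I) := by
    rw [inv_mul_eq_div, le_div_iff₀ (by positivity)]
    exact_mod_cast (Nat.mul_le_mul_left _ (hI i)).trans (card_coordProj_mul_card_le hA i)
  rw [projExcess, mul_assoc, ← nsmul_eq_mul, ← card_univ]
  gcongr
  exact sum_le_card_nsmul _ _ _ fun i _ => hproj i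

end Box

end Projections

section BrunnMinkowski

variable {α : Type*}

section Definition

variable [DecidableEq α] [AddZeroClass α]

variable (α) in
/-- The Brunn–Minkowski inequality in dimension `d`, stated without `d`-th roots: `a` and `b` are
lower bounds for the roots of `projExcess Y` and `|Z|`, and their positivity makes `Y` and `Z`
nonempty. -/
def BrunnMinkowskiDim (d : ℕ) : Prop :=
  ∀ ⦃Y Z : Finset (Fin d → α)⦄ ⦃a b : ℝ⦄, 0 < a → 0 < b → a ^ d ≤ projExcess Y → b ^ d ≤ #Z →
    (a + b) ^ d ≤ #(Y + Z)

lemma BrunnMinkowskiDim.mul_add_pow_le_card {m : ℕ} (hBM : BrunnMinkowskiDim α m) (hm : m ≠ 0)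
    {Y Z : Finset (Fin m → α)} {t u v : ℝ} (ht : 0 < t) (hu : 0 < u) (hv : 0 < v)
    (hY : t * u ^ m ≤ projExcess Y) (hZ : t * v ^ m ≤ #Z) : t * (u + v) ^ m ≤ #(Y + Z) := by
  obtain ⟨s, hs, rfl⟩ := exists_pos_pow_eq hm ht
  rw [← mul_pow] at hY hZ ⊢
  rw [mul_add]
  exact hBM (by positivity) (by positivity) hY hZ

end Definition

variable [LinearOrder α] [AddZeroClass α] [IsCancelAdd α] [AddLeftMono α] [AddRightMono α]

variable (α) in
lemma brunnMinkowskiDim_one : BrunnMinkowskiDim α 1 := by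
  intro Y Z a b ha hb hY hZ
  rw [pow_one] at hY hZ ⊢
  have hYne : Y.Nonempty := nonempty_of_projExcess_pos (ha.trans_le hY)
  have hZne : Z.Nonempty := card_pos.1 (by exact_mod_cast hb.trans_le hZ)
  have hcard (A : Finset (Fin 1 → α)) : #(A.image (Pi.evalAddHom (fun _ => α) 0)) = #A :=
    card_image_of_injective _ fun x y h => funext fun i => Subsingleton.elim i 0 ▸ h
  have hCD := cauchy_davenport_add_of_linearOrder_isCancelAdd
    (hYne.image (Pi.evalAddHom (fun _ => α) 0)) (hZne.image (Pi.evalAddHom (fun _ => α) 0))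
  rw [← image_add, hcard, hcard, hcard, Nat.sub_le_iff_le_add] at hCD
  have hCD_real : (#Y + #Z : ℝ) ≤ #(Y + Z) + 1 := by exact_mod_cast hCD
  have hproj : (1 : ℝ) ≤ #(coordProj 0 Y) := by exact_mod_cast (hYne.image _).card_pos
  rw [projExcess, Fin.sum_univ_one] at hY
  linarith

lemma BrunnMinkowskiDim.projExcess_div_add_card_div_le {m : ℕ} (hBM : BrunnMinkowskiDim α m)
    (hm : m ≠ 0) {Y Z : Finset (Fin (m + 1) → α)} {u v : ℝ} (hu : 0 < u) (hv : 0 < v)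
    {I J : Finset α} (hYI : ∀ y ∈ Y, y 0 ∈ I) (hZJ : ∀ z ∈ Z, z 0 ∈ J)
    (hY_le : ∀ i ∈ I, projExcess (coordSlice i Y) ≤ u ^ m)
    (hY_max : ∃ i ∈ I, projExcess (coordSlice i Y) = u ^ m)
    (hZ_le : ∀ j ∈ J, (#(coordSlice j Z) : ℝ) ≤ v ^ m)
    (hZ_max : ∃ j ∈ J, (#(coordSlice j Z) : ℝ) = v ^ m) :
    projExcess Y / u ^ m + #Z / v ^ m ≤ #(Y + Z) / (u + v) ^ m := by
  have hum : 0 < u ^ m := by positivity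
  have hvm : 0 < v ^ m := by positivity
  have hlevel : ∀ i ∈ I, ∀ j ∈ J,
      min (projExcess (coordSlice i Y) / u ^ m) (#(coordSlice j Z) / v ^ m) ≤
        #(coordSlice (i + j) (Y + Z)) / (u + v) ^ m := by
    intro i _ j _
    obtain ht | ht := le_or_gt (min (projExcess (coordSlice i Y) / u ^ m)
      (#(coordSlice j Z) / v ^ m)) 0
    · exact ht.trans (by positivity)
    · rw [le_div_iff₀ (by positivity)]
      refine (hBM.mul_add_pow_le_card hm ht hu hv ((le_div_iff₀ hum).1 (min_le_left _ _))
        ((le_div_iff₀ hvm).1 (min_le_right _ _))).trans ?_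
      exact_mod_cast card_le_card (coordSlice_add_subset i j Y Z)
  have hYZ : ∀ y ∈ Y + Z, y 0 ∈ I + J :=
    forall_mem_image₂.2 fun y hy z hz => add_mem_add (hYI y hy) (hZJ z hz)
  have hsum := cauchy_davenport_of_min_le
    (h := fun k => #(coordSlice k (Y + Z)) / (u + v) ^ m)
    (fun i hi => (div_le_one hum).2 (hY_le i hi)) (fun j hj => (div_le_one hvm).2 (hZ_le j hj))
    (hY_max.imp fun i hi => ⟨hi.1, (div_eq_one_iff_eq hum.ne').2 hi.2⟩)
    (hZ_max.imp fun j hj => ⟨hj.1, (div_eq_one_iff_eq hvm.ne').2 hj.2⟩)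
    (fun k _ => by positivity) hlevel
  rw [← sum_div, ← sum_div, ← sum_div, sum_projExcess_coordSlice hYI, add_div, ← Nat.cast_sum,
    ← Nat.cast_sum, sum_card_coordSlice hZJ, sum_card_coordSlice hYZ] at hsum
  have hproj : 1 ≤ (#(coordProj 0 Y) : ℝ) / u ^ m := by
    obtain ⟨i, -, hi⟩ := hY_max
    rw [one_le_div hum, ← hi]
    refine (projExcess_le_card _).trans ?_
    exact_mod_cast card_coordSlice_le_card_coordProj_zero i Y
  linarith

lemma BrunnMinkowskiDim.succ {m : ℕ} (hBM : BrunnMinkowskiDim α m) (hm : m ≠ 0) :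
    BrunnMinkowskiDim α (m + 1) := by
  intro Y Z a b ha hb hY hZ
  have hYI : ∀ y ∈ Y, y 0 ∈ Y.image (· 0) := fun y => mem_image_of_mem _
  have hZJ : ∀ z ∈ Z, z 0 ∈ Z.image (· 0) := fun z => mem_image_of_mem _
  have hYpos : 0 < projExcess Y := (pow_pos ha _).trans_le hY
  have hZpos : (0 : ℝ) < #Z := (pow_pos hb _).trans_le hZ
  obtain ⟨u, hu, hY_le, hY_max⟩ := exists_pow_eq_max_of_sum_pos hm
    (f := fun i => projExcess (coordSlice i Y)) (I := Y.image (· 0))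
    (by rw [sum_projExcess_coordSlice hYI]; positivity)
  obtain ⟨v, hv, hZ_le, hZ_max⟩ := exists_pow_eq_max_of_sum_pos hm
    (f := fun j => (#(coordSlice j Z) : ℝ)) (I := Z.image (· 0))
    (by rwa [← Nat.cast_sum, sum_card_coordSlice hZJ])
  rw [← div_le_div_iff_of_pos_right (c := (u + v) ^ m) (by positivity)]
  calc
    (a + b) ^ (m + 1) / (u + v) ^ m ≤ a ^ (m + 1) / u ^ m + b ^ (m + 1) / v ^ m :=
      add_pow_succ_div_le ha.le hb.le hu hv m
    _ ≤ projExcess Y / u ^ m + #Z / v ^ m := by gcongr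
    _ ≤ #(Y + Z) / (u + v) ^ m :=
      hBM.projExcess_div_add_card_div_le hm hu hv hYI hZJ hY_le hY_max hZ_le hZ_max

variable (α) in
lemma brunnMinkowskiDim {d : ℕ} (hd : d ≠ 0) : BrunnMinkowskiDim α d := by
  induction d, Nat.one_le_iff_ne_zero.2 hd using Nat.le_induction with
  | base => exact brunnMinkowskiDim_one α
  | succ m hm ih => exact (ih (Nat.ne_zero_of_lt hm)).succ (Nat.ne_zero_of_lt hm)

theorem bm_in_boxes_general {d : ℕ} (hd : d ≠ 0) {Y Z : Finset (Fin d → α)}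
    (hY : Y.Nonempty) (hZ : Z.Nonempty) :
    (max (projExcess Y) 0) ^ ((1 : ℝ) / d) + (#Z : ℝ) ^ ((1 : ℝ) / d) ≤
      (#(Y + Z) : ℝ) ^ ((1 : ℝ) / d) := by
  rw [one_div]
  have hZpos : (0 : ℝ) < #Z := by exact_mod_cast hZ.card_pos
  obtain hneg | hpos := le_or_gt (projExcess Y) 0
  · rw [max_eq_right hneg, Real.zero_rpow (by positivity), zero_add]
    have hcard : (#Z : ℝ) ≤ #(Y + Z) := by exact_mod_cast card_le_card_add_left hY
    exact Real.rpow_le_rpow hZpos.le hcard (by positivity)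
  · rw [max_eq_left hpos.le, Real.le_rpow_inv_iff_of_pos (by positivity) (by positivity)
      (by positivity), Real.rpow_natCast]
    exact brunnMinkowskiDim α hd (by positivity) (by positivity)
      (Real.rpow_inv_natCast_pow hpos.le hd).le (Real.rpow_inv_natCast_pow hZpos.le hd).le

end BrunnMinkowski

theorem bm_in_boxes (d n : ℕ) (hd : 0 < d) (hn : 0 < n)
    (ns : Fin d → ℕ) (hns : ∀ i, n ≤ ns i)
    (P : Finset (Fin d → ℤ)) (hP : P = Fintype.piFinset (fun i => Finset.Icc 0 (ns i : ℤ)))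
    (Y Z : Finset (Fin d → ℤ)) (hYP : Y ⊆ P) (hY : Y.Nonempty) (hZ : Z.Nonempty) :
    ((Y + Z).card : ℝ) ^ ((1 : ℝ) / d) ≥
      (max ((Y.card : ℝ) - d * (n : ℝ)⁻¹ * P.card) 0) ^ ((1 : ℝ) / d)
        + (Z.card : ℝ) ^ ((1 : ℝ) / d) := by
  subst hP
  refine le_trans ?_ (bm_in_boxes_general hd.ne' hY hZ)
  gcongr
  simpa using card_sub_le_projExcess hn (fun i => (hns i).trans (by simp)) hYP
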